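/- arXiv:1602.00351 — 3 statements merged into one kernel-verified Lean document; each statement's English description precedes it below -/
import Mathlib

section
/- For any vectors g_1, …, g_T ∈ ℝ^d, with s_{t,i} = ‖g_{1:t,i}‖₂ = sqrt(Σ_{τ=1}^t g_{τ,i}²) and the convention that a summand with s_{t,i} = 0 (equivalently g_{t,i} = 0) is taken to be 0, one has Σ_{t=1}^T ⟨g_t, diag(s_t)^{-1} g_t⟩ = Σ_{t=1}^T Σ_{i=1}^d g_{t,i}² / s_{t,i} ≤ 2 Σ_{i=1}^d ‖g_{1:T,i}‖₂. -/
open Finset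

/-!
Every coordinate telescopes: with cumulative sums `S t = ∑ τ ≤ t, (g τ i) ^ 2`, concavity of the
square root bounds the `t`-th summand `(S t - S (t - 1)) / √(S t)` by the increment
`2 * (√(S t) - √(S (t - 1)))`.
-/

theorem sub_div_sqrt_le_two_mul_sqrt_sub_sqrt {x y : ℝ} (hx : 0 ≤ x) (hxy : x ≤ y) :
    (y - x) / √y ≤ 2 * (√y - √x) := by
  have hsub : 0 ≤ √y - √x := sub_nonneg.mpr (Real.sqrt_le_sqrt hxy)
  -- This also covers `y = 0`, where the quotient is `0` by convention.
  refine div_le_of_le_mul₀ (Real.sqrt_nonneg y) (by positivity) ?_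
  calc y - x = √y ^ 2 - √x ^ 2 := by rw [Real.sq_sqrt (hx.trans hxy), Real.sq_sqrt hx]
    _ = (√y - √x) * (√y + √x) := by ring
    _ ≤ (√y - √x) * (√y + √y) := by gcongr
    _ = 2 * (√y - √x) * √y := by ring

theorem sum_div_sqrt_sum_le_two_mul_sqrt_sum {ι : Type*} [LinearOrder ι] (s : Finset ι)
    {a : ι → ℝ} (ha : ∀ t ∈ s, 0 ≤ a t) :
    ∑ t ∈ s, a t / √(∑ τ ∈ s with τ ≤ t, a τ) ≤ 2 * √(∑ t ∈ s, a t) := by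
  induction s using Finset.induction_on_max with
  | empty => simp
  | insert m s hm ih =>
    have hms : m ∉ s := fun h => (hm m h).false
    obtain ⟨ham, has⟩ := (forall_mem_insert _ _ _).mp ha
    have filter_le_max : {τ ∈ insert m s | τ ≤ m} = insert m s :=
      filter_true_of_mem <| (forall_mem_insert _ _ _).mpr ⟨le_rfl, fun τ hτ => (hm τ hτ).le⟩
    have filter_le_of_mem : ∀ t ∈ s, {τ ∈ insert m s | τ ≤ t} = {τ ∈ s | τ ≤ t} :=
      fun t ht => by rw [filter_insert, if_neg (hm t ht).not_ge]
    have increment_le : a m / √(a m + ∑ t ∈ s, a t) ≤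
        2 * (√(a m + ∑ t ∈ s, a t) - √(∑ t ∈ s, a t)) := by
      simpa only [add_sub_cancel_right] using sub_div_sqrt_le_two_mul_sqrt_sub_sqrt
        (sum_nonneg has) (le_add_of_nonneg_left ham)
    calc ∑ t ∈ insert m s, a t / √(∑ τ ∈ insert m s with τ ≤ t, a τ)
        = a m / √(a m + ∑ t ∈ s, a t) + ∑ t ∈ s, a t / √(∑ τ ∈ s with τ ≤ t, a τ) := by
          rw [sum_insert hms, filter_le_max, sum_insert hms]
          congr 1
          exact sum_congr rfl fun t ht => by rw [filter_le_of_mem t ht]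
      _ ≤ 2 * (√(a m + ∑ t ∈ s, a t) - √(∑ t ∈ s, a t)) + 2 * √(∑ t ∈ s, a t) :=
          add_le_add increment_le (ih has)
      _ = 2 * √(∑ t ∈ insert m s, a t) := by
          rw [sum_insert hms]
          ring

/-- **Lemma 1 (AdaOAM)**: for vectors `g 1, …, g T ∈ ℝ^d`, with
`s t i = ‖g_{1:t,i}‖₂ = sqrt (∑_{τ ≤ t} (g τ i)^2)` (and the summand taken to be `0`
when `s t i = 0`, which here is automatic since then `g t i = 0` and `0 / 0 = 0`),
`∑_t ⟨g_t, diag (s_t)⁻¹ g_t⟩ = ∑_t ∑_i (g t i)^2 / s t i ≤ 2 ∑_i ‖g_{1:T,i}‖₂`. -/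
theorem adaGrad_diag_inner_sum_le (T d : ℕ) (g : Fin T → Fin d → ℝ) :
    ∑ t : Fin T, ∑ i : Fin d,
        (g t i) ^ 2 /
          Real.sqrt (∑ τ ∈ Finset.univ.filter (fun τ : Fin T => τ ≤ t), (g τ i) ^ 2)
      ≤ 2 * ∑ i : Fin d, Real.sqrt (∑ t : Fin T, (g t i) ^ 2) := by
  rw [sum_comm, mul_sum]
  exact sum_le_sum fun i _ =>
    sum_div_sqrt_sum_le_two_mul_sqrt_sum univ fun t _ => sq_nonneg (g t i)
end

section
/- Let χ ⊆ ℝ^d be a nonempty closed convex set with sup_{w,u ∈ χ} ‖w − u‖_∞ ≤ D_∞, and let f_1, …, f_T : ℝ^d → ℝ be convex differentiable functions. Let w_1 ∈ χ, g_t = ∇f_t(w_t), s_{t,i} = ‖g_{1:t,i}‖₂, and assume s_{t,i} > 0 for all t, i. Define H_t = diag(s_{t,1}, …, s_{t,d}) and generate the iterates by the adaptive mirror-descent update w_{t+1} = argmin_{w ∈ χ} { η⟨g_t, w⟩ + (1/2)⟨w − w_t, H_t (w − w_t)⟩ } with learning rate η = D_∞/√2. Then for every w* ∈ χ, Σ_{t=1}^T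 [ f_t(w_t) − f_t(w*) ] ≤ √2 · D_∞ · Σ_{i=1}^d ‖g_{1:T,i}‖₂. -/
open Finset
open scoped RealInnerProductSpace

/-!
Convexity linearizes the regret: `f t (w t) - f t u ≤ ⟪g t, w t - u⟫`. A mirror step minimizes a
linear function plus a quadratic form over a convex set, so moving from its minimizer to `u` raises
the objective by at least the quadratic form at the displacement, whence
`η * ⟪g t, w t - u⟫ ≤ ∑ i, (s t i / 2 * ((u i - w t i) ^ 2 - (u i - w (t + 1) i) ^ 2)
  + η ^ 2 / 2 * (g t i ^ 2 / s t i))`.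
Fix a coordinate `i` and sum over `t < T`. As `s t i` increases with `t`, summation by parts bounds
the first terms by `‖g_{1:T,i}‖₂ * Dinf ^ 2 / 2`; as `g t i ^ 2` is the increment of `s t i ^ 2`,
the second ones telescope to at most `η ^ 2 * ‖g_{1:T,i}‖₂`. The rate `η = Dinf / √2` balances the
two bounds.
-/

open Filter Topology

section Convex

theorem le_sub_of_convexOn_of_hasFDerivWithinAt {E : Type*} [NormedAddCommGroup E]
    [NormedSpace ℝ E] {S : Set E} {f : E → ℝ} {f' : E →L[ℝ] ℝ} {x y : E} (hf : ConvexOn ℝ S f)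
    (hx : x ∈ S) (hy : y ∈ S) (hf' : HasFDerivWithinAt f f' S x) : f' (y - x) ≤ f y - f x := by
  let line : ℝ →ᵃ[ℝ] E := AffineMap.lineMap x y
  have hconv : ConvexOn ℝ (line ⁻¹' S) (f ∘ line) := hf.comp_affineMap line
  have hderiv : HasDerivWithinAt (f ∘ line) (f' (y - x)) (line ⁻¹' S) 0 :=
    hf'.comp_hasDerivWithinAt_of_eq 0 AffineMap.hasDerivWithinAt_lineMap
      (Set.mapsTo_preimage line S) (by simp [line])
  calc f' (y - x)
      ≤ slope (f ∘ line) 0 1 :=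
        hconv.le_slope_of_hasDerivWithinAt (by simpa [line]) (by simpa [line]) one_pos hderiv
    _ = f y - f x := by simp [slope, line]

theorem sub_le_inner_sub_of_convexOn_of_hasGradientWithinAt {F : Type*} [NormedAddCommGroup F]
    [InnerProductSpace ℝ F] [CompleteSpace F] {S : Set F} {f : F → ℝ} {f' x y : F}
    (hf : ConvexOn ℝ S f) (hx : x ∈ S) (hy : y ∈ S) (hf' : HasGradientWithinAt f f' S x) :
    f x - f y ≤ ⟪f', x - y⟫ := by
  have h : ⟪f', y - x⟫ ≤ f y - f x :=
    le_sub_of_convexOn_of_hasFDerivWithinAt hf hx hy hf'.hasFDerivWithinAt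
  rw [← neg_sub y x, inner_neg_right]
  linarith

theorem add_quadraticForm_sub_le_of_isMinOn {E : Type*} [AddCommGroup E] [Module ℝ E] {χ : Set E}
    {φ : E → ℝ} (hφ : ConvexOn ℝ χ φ) (Q : QuadraticForm ℝ E) {w v u : E} (hv : v ∈ χ)
    (hu : u ∈ χ) (hmin : IsMinOn (fun x ↦ φ x + Q (x - w)) χ v) :
    φ v + Q (v - w) + Q (u - v) ≤ φ u + Q (u - w) := by
  set p := QuadraticMap.polar Q (v - w) (u - v)
  have hQu : Q (u - w) = Q (v - w) + Q (u - v) + p := by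
    rw [← QuadraticMap.map_add Q, sub_add_sub_cancel']
  have hsegment : ∀ θ ∈ Set.Ioc (0 : ℝ) 1, 0 ≤ φ u - φ v + p + θ * Q (u - v) := by
    rintro θ ⟨hθ₀, hθ₁⟩
    have hle : φ v + Q (v - w) ≤ φ (v + θ • (u - v)) + Q (v + θ • (u - v) - w) :=
      isMinOn_iff.1 hmin _ (hφ.1.add_smul_sub_mem hv hu ⟨hθ₀.le, hθ₁⟩)
    have hφθ : φ (v + θ • (u - v)) ≤ (1 - θ) * φ v + θ * φ u := by
      have h := hφ.2 hv hu (sub_nonneg.2 hθ₁) hθ₀.le (sub_add_cancel 1 θ)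
      rwa [show (1 - θ) • v + θ • u = v + θ • (u - v) by module] at h
    have hQθ : Q (v + θ • (u - v) - w) = Q (v - w) + θ * θ * Q (u - v) + θ * p := by
      rw [add_sub_right_comm, QuadraticMap.map_add Q, QuadraticMap.map_smul,
        QuadraticMap.polar_smul_right, smul_eq_mul, smul_eq_mul]
    refine nonneg_of_mul_nonneg_right ?_ hθ₀
    linarith
  have hlim : Tendsto (fun θ ↦ φ u - φ v + p + θ * Q (u - v)) (𝓝[>] 0) (𝓝 (φ u - φ v + p)) :=
    tendsto_nhdsWithin_of_tendsto_nhds <| Continuous.tendsto' (by fun_prop) _ _ (by simp)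
  have hfirstOrder : 0 ≤ φ u - φ v + p :=
    ge_of_tendsto hlim (eventually_of_mem (Ioc_mem_nhdsGT one_pos) hsegment)
  linarith

end Convex

section MirrorStep

theorem mul_le_half_mul_sq_add_sq_div {s a : ℝ} (hs : 0 ≤ s) (ha : s = 0 → a = 0) (x : ℝ) :
    a * x ≤ s / 2 * x ^ 2 + a ^ 2 / s / 2 := by
  rcases hs.eq_or_lt with rfl | hs
  · simp [ha rfl]
  · have hsquare : s / 2 * x ^ 2 + a ^ 2 / s / 2 - a * x = (s * x - a) ^ 2 / (2 * s) := by
      field_simp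
      ring
    have : 0 ≤ (s * x - a) ^ 2 / (2 * s) := by positivity
    linarith

variable {ι : Type*} [Fintype ι]

/-- The objective `u ↦ η⟨g, u⟩ + ½⟨u - w, H (u - w)⟩` of a mirror-descent step from `w`, where
`H = diag s`. -/
noncomputable def mirrorObjective (η : ℝ) (s : ι → ℝ) (g w u : EuclideanSpace ℝ ι) : ℝ :=
  η * ⟪g, u⟫ + (1 / 2) * ∑ i, s i * (u i - w i) ^ 2

variable {χ : Set (EuclideanSpace ℝ ι)} {η : ℝ} {s : ι → ℝ} {g w v u : EuclideanSpace ℝ ι}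

theorem mul_inner_minimizer_sub_le_of_isMinOn (hχ : Convex ℝ χ) (hv : v ∈ χ) (hu : u ∈ χ)
    (hmin : IsMinOn (mirrorObjective η s g w) χ v) :
    η * ⟪g, v - u⟫ ≤ ∑ i, s i / 2 * ((u i - w i) ^ 2 - (u i - v i) ^ 2 - (v i - w i) ^ 2) := by
  let Q : QuadraticForm ℝ (EuclideanSpace ℝ ι) :=
    (1 / 2 : ℝ) • (QuadraticMap.weightedSumSquares ℝ s).comp (WithLp.linearEquiv 2 ℝ (ι → ℝ))
  have hQ (x y : EuclideanSpace ℝ ι) : Q (x - y) = (1 / 2) * ∑ i, s i * (x i - y i) ^ 2 := by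
    simp [Q, QuadraticMap.weightedSumSquares_apply, sq]
  have hlinear : ConvexOn ℝ χ fun x ↦ η * ⟪g, x⟫ := (η • innerₛₗ ℝ g).convexOn hχ
  have hthreePoint := add_quadraticForm_sub_le_of_isMinOn hlinear Q hv hu (w := w) <| by
    simp only [hQ]
    exact hmin
  simp only [hQ] at hthreePoint
  calc η * ⟪g, v - u⟫
      ≤ (1 / 2) * ∑ i, s i * (u i - w i) ^ 2 - (1 / 2) * ∑ i, s i * (u i - v i) ^ 2
          - (1 / 2) * ∑ i, s i * (v i - w i) ^ 2 := by rw [inner_sub_right]; linarith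
    _ = ∑ i, s i / 2 * ((u i - w i) ^ 2 - (u i - v i) ^ 2 - (v i - w i) ^ 2) := by
        simp only [mul_sum, ← sum_sub_distrib]
        exact sum_congr rfl fun i _ ↦ by ring

theorem mul_inner_sub_le_of_isMinOn_mirrorObjective (hχ : Convex ℝ χ) (hs : ∀ i, 0 ≤ s i)
    (hg : ∀ i, s i = 0 → g i = 0) (hv : v ∈ χ) (hu : u ∈ χ)
    (hmin : IsMinOn (mirrorObjective η s g w) χ v) :
    η * ⟪g, w - u⟫ ≤
      ∑ i, (s i / 2 * ((u i - w i) ^ 2 - (u i - v i) ^ 2) + η ^ 2 / 2 * (g i ^ 2 / s i)) := by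
  have hyoung (i : ι) :
      η * g i * (w i - v i) ≤ s i / 2 * (w i - v i) ^ 2 + (η * g i) ^ 2 / s i / 2 :=
    mul_le_half_mul_sq_add_sq_div (hs i) (fun hsi ↦ by rw [hg i hsi, mul_zero]) _
  calc η * ⟪g, w - u⟫
      = η * ⟪g, v - u⟫ + ∑ i, η * g i * (w i - v i) := by
        rw [← sub_add_sub_cancel' v u w, inner_add_right, mul_add, PiLp.inner_apply g (w - v),
          mul_sum]
        simp [mul_comm, mul_assoc]
    _ ≤ (∑ i, s i / 2 * ((u i - w i) ^ 2 - (u i - v i) ^ 2 - (v i - w i) ^ 2))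
          + ∑ i, (s i / 2 * (w i - v i) ^ 2 + (η * g i) ^ 2 / s i / 2) :=
        add_le_add (mul_inner_minimizer_sub_le_of_isMinOn hχ hv hu hmin)
          (sum_le_sum fun i _ ↦ hyoung i)
    _ = ∑ i, (s i / 2 * ((u i - w i) ^ 2 - (u i - v i) ^ 2) + η ^ 2 / 2 * (g i ^ 2 / s i)) := by
        rw [← sum_add_distrib]
        exact sum_congr rfl fun i _ ↦ by ring

end MirrorStep

section PrefixNorm

/-- The Euclidean norm `‖a_{1:n}‖₂` of the first `n` terms of a sequence. As sequences are indexed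
from `0`, these are `a 0, …, a (n - 1)`. -/
noncomputable def prefixNorm (a : ℕ → ℝ) (n : ℕ) : ℝ :=
  √(∑ τ ∈ range n, a τ ^ 2)

variable (a : ℕ → ℝ)

theorem prefixNorm_nonneg (n : ℕ) : 0 ≤ prefixNorm a n :=
  Real.sqrt_nonneg _

theorem prefixNorm_succ_sq (n : ℕ) : prefixNorm a (n + 1) ^ 2 = prefixNorm a n ^ 2 + a n ^ 2 := by
  have hsq (m : ℕ) : prefixNorm a m ^ 2 = ∑ τ ∈ range m, a τ ^ 2 :=
    Real.sq_sqrt (sum_nonneg fun τ _ ↦ sq_nonneg (a τ))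
  rw [hsq, hsq, sum_range_succ]

theorem monotone_prefixNorm : Monotone (prefixNorm a) :=
  monotone_nat_of_le_succ fun n ↦ le_of_sq_le_sq
    (by linarith [prefixNorm_succ_sq a n, sq_nonneg (a n)]) (prefixNorm_nonneg a _)

theorem abs_le_prefixNorm_succ (n : ℕ) : |a n| ≤ prefixNorm a (n + 1) :=
  abs_le_of_sq_le_sq
    (by linarith [prefixNorm_succ_sq a n, sq_nonneg (prefixNorm a n)]) (prefixNorm_nonneg a _)

theorem sum_sq_div_prefixNorm_succ_le (n : ℕ) :
    ∑ t ∈ range n, a t ^ 2 / prefixNorm a (t + 1) ≤ 2 * prefixNorm a n := by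
  have hincrement (t : ℕ) :
      a t ^ 2 / prefixNorm a (t + 1) ≤ 2 * prefixNorm a (t + 1) - 2 * prefixNorm a t := by
    have hmono := monotone_prefixNorm a t.le_succ
    refine div_le_of_le_mul₀ (prefixNorm_nonneg a _) (by linarith) ?_
    calc a t ^ 2
        = (prefixNorm a (t + 1) - prefixNorm a t) * (prefixNorm a (t + 1) + prefixNorm a t) := by
          linear_combination -prefixNorm_succ_sq a t
      _ ≤ (prefixNorm a (t + 1) - prefixNorm a t) * (2 * prefixNorm a (t + 1)) :=
          mul_le_mul_of_nonneg_left (by linarith) (sub_nonneg.2 hmono)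
      _ = (2 * prefixNorm a (t + 1) - 2 * prefixNorm a t) * prefixNorm a (t + 1) := by ring
  calc ∑ t ∈ range n, a t ^ 2 / prefixNorm a (t + 1)
      ≤ ∑ t ∈ range n, (2 * prefixNorm a (t + 1) - 2 * prefixNorm a t) :=
        sum_le_sum fun t _ ↦ hincrement t
    _ = 2 * prefixNorm a n - 2 * prefixNorm a 0 := sum_range_sub (fun t ↦ 2 * prefixNorm a t) n
    _ ≤ 2 * prefixNorm a n := by linarith [prefixNorm_nonneg a 0]

end PrefixNorm

section Regret

theorem sum_range_mul_sub_succ_le {R : Type*} [CommRing R] [LinearOrder R] [IsStrictOrderedRing R]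
    {a b : ℕ → R} {C : R} (ha : Monotone a) (ha₀ : 0 ≤ a 0) {n : ℕ} (hb : ∀ t ≤ n, b t ≤ C) :
    ∑ t ∈ range n, a (t + 1) * (b t - b (t + 1)) ≤ a n * (C - b n) := by
  induction n with
  | zero => simpa using mul_nonneg ha₀ (sub_nonneg.2 (hb 0 le_rfl))
  | succ n ih =>
    have hstep : 0 ≤ (a (n + 1) - a n) * (C - b n) :=
      mul_nonneg (sub_nonneg.2 (ha n.le_succ)) (sub_nonneg.2 (hb n n.le_succ))
    rw [sum_range_succ]
    linarith [ih fun t ht ↦ hb t (ht.trans n.le_succ)]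

theorem sum_coordinate_mirrorStep_le {a x : ℕ → ℝ} {u D : ℝ} {T : ℕ}
    (hD : ∀ t ≤ T, |u - x t| ≤ D) (η : ℝ) :
    ∑ t ∈ range T, (prefixNorm a (t + 1) / 2 * ((u - x t) ^ 2 - (u - x (t + 1)) ^ 2)
        + η ^ 2 / 2 * (a t ^ 2 / prefixNorm a (t + 1)))
      ≤ (D ^ 2 / 2 + η ^ 2) * prefixNorm a T := by
  have hdistance : ∑ t ∈ range T, prefixNorm a (t + 1) * ((u - x t) ^ 2 - (u - x (t + 1)) ^ 2)
      ≤ prefixNorm a T * (D ^ 2 - (u - x T) ^ 2) :=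
    sum_range_mul_sub_succ_le (b := fun t ↦ (u - x t) ^ 2) (monotone_prefixNorm a)
      (prefixNorm_nonneg a 0) fun t ht ↦ sq_le_sq.2 ((hD t ht).trans (le_abs_self D))
  have hgradient := mul_le_mul_of_nonneg_left (sum_sq_div_prefixNorm_succ_le a T) (sq_nonneg η)
  have hlast := mul_nonneg (prefixNorm_nonneg a T) (sq_nonneg (u - x T))
  simp only [sum_add_distrib, div_mul_eq_mul_div, ← mul_sum, ← sum_div]
  linarith

variable {ι : Type*} [Fintype ι] {χ : Set (EuclideanSpace ℝ ι)} {D η : ℝ} {T : ℕ}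
  {w g : ℕ → EuclideanSpace ℝ ι} {u : EuclideanSpace ℝ ι}

theorem mul_sum_inner_sub_le_of_isMinOn_mirrorObjective (hχ : Convex ℝ χ)
    (hD : ∀ x ∈ χ, ∀ y ∈ χ, ∀ i, |x i - y i| ≤ D) (hw : ∀ t ≤ T, w t ∈ χ)
    (hmin : ∀ t < T,
      IsMinOn (mirrorObjective η (fun i ↦ prefixNorm (g · i) (t + 1)) (g t) (w t)) χ (w (t + 1)))
    (hu : u ∈ χ) :
    η * ∑ t ∈ range T, ⟪g t, w t - u⟫ ≤
      (D ^ 2 / 2 + η ^ 2) * ∑ i, prefixNorm (g · i) T := by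
  rw [mul_sum, mul_sum]
  refine (sum_le_sum fun t ht ↦ ?_).trans <| sum_comm.trans_le <| sum_le_sum fun i _ ↦
    sum_coordinate_mirrorStep_le (fun t ht ↦ hD u hu (w t) (hw t ht) i) η
  rw [mem_range] at ht
  exact mul_inner_sub_le_of_isMinOn_mirrorObjective hχ (fun i ↦ prefixNorm_nonneg _ _)
    (fun i hi ↦ abs_nonpos_iff.1 (hi ▸ abs_le_prefixNorm_succ (g · i) t)) (hw (t + 1) ht) hu
    (hmin t ht)

theorem adaGrad_mirror_descent_regret_general (hχ : Convex ℝ χ)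
    (hD : ∀ x ∈ χ, ∀ y ∈ χ, ∀ i, |x i - y i| ≤ D) {f : ℕ → EuclideanSpace ℝ ι → ℝ}
    (hw : ∀ t ≤ T, w t ∈ χ) (hg : ∀ t < T, ∀ x ∈ χ, f t (w t) - f t x ≤ ⟪g t, w t - x⟫)
    (hη : η = D / √2)
    (hmin : ∀ t < T,
      IsMinOn (mirrorObjective η (fun i ↦ prefixNorm (g · i) (t + 1)) (g t) (w t)) χ (w (t + 1)))
    (hu : u ∈ χ) :
    ∑ t ∈ range T, (f t (w t) - f t u) ≤ √2 * D * ∑ i, prefixNorm (g · i) T := by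
  have hlinearized : ∑ t ∈ range T, (f t (w t) - f t u) ≤ ∑ t ∈ range T, ⟪g t, w t - u⟫ :=
    sum_le_sum fun t ht ↦ hg t (mem_range.1 ht) u hu
  refine hlinearized.trans ?_
  have hD₀ (i : ι) : 0 ≤ D := (abs_nonneg _).trans (hD u hu u hu i)
  by_cases hDpos : 0 < D
  · have hηpos : 0 < η := by rw [hη]; positivity
    have hDη : D = √2 * η := by rw [hη]; field_simp
    refine le_of_mul_le_mul_left ?_ hηpos
    calc η * ∑ t ∈ range T, ⟪g t, w t - u⟫
        ≤ (D ^ 2 / 2 + η ^ 2) * ∑ i, prefixNorm (g · i) T :=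
          mul_sum_inner_sub_le_of_isMinOn_mirrorObjective hχ hD hw hmin hu
      _ = η * (√2 * D * ∑ i, prefixNorm (g · i) T) := by
          rw [hDη]
          linear_combination (-η ^ 2 / 2 * ∑ i, prefixNorm (g · i) T) * Real.sq_sqrt zero_le_two
  · have hstationary : ∀ t ∈ range T, ⟪g t, w t - u⟫ = 0 := fun t ht ↦ by
      have hwu : w t = u := by
        ext i
        exact sub_eq_zero.1 <| abs_nonpos_iff.1 <|
          (hD _ (hw t (mem_range.1 ht).le) u hu i).trans (not_lt.1 hDpos)
      rw [hwu, sub_self, inner_zero_right]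
    rw [sum_eq_zero hstationary, mul_sum]
    exact sum_nonneg fun i _ ↦
      mul_nonneg (mul_nonneg (Real.sqrt_nonneg 2) (hD₀ i)) (prefixNorm_nonneg _ T)

end Regret

/-- **Lemma 2 (AdaOAM)**: regret bound for adaptive diagonal (composite) mirror descent
with zero regularizer.  `χ ⊆ ℝ^d` is a nonempty closed convex set whose `ℓ∞`-diameter is
at most `Dinf`; the `f t` are convex differentiable; `g t = ∇ f t (w t)`;
`s t i = ‖g_{1:t,i}‖₂ > 0`; `H t = diag (s t)`; the iterates are generated by the
adaptive mirror-descent update with learning rate `η = Dinf / √2`.  Then for every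
`w* ∈ χ`, `∑_{t<T} (f t (w t) - f t w*) ≤ √2 · Dinf · ∑_i ‖g_{1:T,i}‖₂`. -/
theorem adaGrad_mirror_descent_regret (d T : ℕ)
    (χ : Set (EuclideanSpace ℝ (Fin d)))
    (hne : χ.Nonempty) (hcl : IsClosed χ) (hconv : Convex ℝ χ)
    (Dinf : ℝ)
    (hD : ∀ w ∈ χ, ∀ u ∈ χ, ∀ i : Fin d, |w i - u i| ≤ Dinf)
    (f : ℕ → EuclideanSpace ℝ (Fin d) → ℝ)
    (hfconv : ∀ t, ConvexOn ℝ Set.univ (f t))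
    (hfdiff : ∀ t, Differentiable ℝ (f t))
    (w : ℕ → EuclideanSpace ℝ (Fin d))
    (hw1 : w 0 ∈ χ)
    (g : ℕ → EuclideanSpace ℝ (Fin d))
    (hg : ∀ t, g t = gradient (f t) (w t))
    (s : ℕ → Fin d → ℝ)
    (hs : ∀ t i, s t i = Real.sqrt (∑ τ ∈ Finset.range (t + 1), (g τ i) ^ 2))
    (hspos : ∀ t ∈ Finset.range T, ∀ i : Fin d, 0 < s t i)
    (η : ℝ) (hη : η = Dinf / Real.sqrt 2)
    (hupdate : ∀ t ∈ Finset.range T,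
      w (t + 1) ∈ χ ∧ ∀ u ∈ χ,
        η * ⟪g t, w (t + 1)⟫ + (1 / 2) * ∑ i : Fin d, s t i * (w (t + 1) i - w t i) ^ 2
          ≤ η * ⟪g t, u⟫ + (1 / 2) * ∑ i : Fin d, s t i * (u i - w t i) ^ 2)
    (wstar : EuclideanSpace ℝ (Fin d)) (hwstar : wstar ∈ χ) :
    ∑ t ∈ Finset.range T, (f t (w t) - f t wstar)
      ≤ Real.sqrt 2 * Dinf *
          ∑ i : Fin d, Real.sqrt (∑ t ∈ Finset.range T, (g t i) ^ 2) := by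
  obtain rfl : s = fun t i ↦ prefixNorm (g · i) (t + 1) := funext₂ hs
  exact adaGrad_mirror_descent_regret_general hconv hD
    (fun | 0, _ => hw1 | t + 1, ht => (hupdate t (mem_range.2 ht)).1)
    (fun t _ u _ ↦ hg t ▸ sub_le_inner_sub_of_convexOn_of_hasGradientWithinAt (hfconv t)
      (Set.mem_univ _) (Set.mem_univ u) (hasGradientWithinAt_univ.2 (hfdiff t _).hasGradientAt))
    hη (fun t ht ↦ isMinOn_iff.2 (hupdate t (mem_range.2 ht)).2) hwstar
end

section
/- Under the setting of the coordinatewise gradient bound — λ > 0, a sequence (x_t, y_t) with ‖x_t‖₂ ≤ 1 and y_t ∈ {−1,+1}, iterates w_t with ‖w_t‖₂ ≤ 1/√λ, and g_t = ∇L_t(w_t) the gradient of the per-round loss L_t(w) = (λ/2)‖w‖₂² + (1/(2N_t)) Σ_{j<t, y_j≠y_t} (1 − y_t (x_t − x_j)·w)² when N_t = |{j<t : y_j ≠ y_t}| > 0 and L_t = 0 (so g_t = 0) when N_t = 0 — it holds that Σ_{i=1}^d ‖g_{1:T,i}‖₂ ≤ √2 · Σ_{i=1}^d sqrt( Σ_{t=1}^T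 [ (λ w_{t,i})² + C (r_{t,i})² ] ), where C = (1 + 2/√λ)² and r_{t,i} = max_{j<t, y_j ≠ y_t} |x_{j,i} − x_{t,i}| (r_{t,i} = 0 if N_t = 0). -/
open Finset
open scoped RealInnerProductSpace

open scoped BigOperators

/-!
In each round the loss is a ridge-regularised mean of squares, so its gradient is `λ w` minus the
mean of the vectors `residual • feature`. Every residual is at most `√C` in absolute value, and the
`i`-th coordinate of every feature is at most `r_{t,i}`, so `(a - b)² ≤ 2 (a² + b²)` bounds the
square of `g_{t,i}` by `2 ((λ w_{t,i})² + C r_{t,i}²)`.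
-/

lemma sum_sqrt_sum_le_sqrt_mul {ι κ : Type*} {s : Finset ι} {u : Finset κ} {c : ℝ} (hc : 0 ≤ c)
    {f h : κ → ι → ℝ} (hfh : ∀ t ∈ u, ∀ i ∈ s, f t i ≤ c * h t i) :
    ∑ i ∈ s, √(∑ t ∈ u, f t i) ≤ √c * ∑ i ∈ s, √(∑ t ∈ u, h t i) := by
  rw [mul_sum]
  refine sum_le_sum fun i hi => ?_
  rw [← Real.sqrt_mul hc, mul_sum]
  exact Real.sqrt_le_sqrt (sum_le_sum fun t ht => hfh t ht i hi)

section InnerProductSpace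

variable {E : Type*} [NormedAddCommGroup E] [InnerProductSpace ℝ E]

lemma abs_sub_inner_le {z v : E} {ρ W : ℝ} (b : ℝ) (hz : ‖z‖ ≤ ρ) (hv : ‖v‖ ≤ W) :
    |b - ⟪z, v⟫| ≤ |b| + ρ * W :=
  calc |b - ⟪z, v⟫| ≤ |b| + |⟪z, v⟫| := abs_sub _ _
    _ ≤ |b| + ‖z‖ * ‖v‖ := by gcongr; exact abs_real_inner_le_norm z v
    _ ≤ |b| + ρ * W := by have := (norm_nonneg z).trans hz; gcongr

variable {κ : Type*}

/-- The ridge regression objective: half the mean squared residual of the linear predictor `v` over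
the examples `(z j, b j)`, `j ∈ S`, plus the penalty `lam / 2 * ‖v‖ ^ 2`. The pairwise AUC loss of
one round is the case of features `y t • (x t - x j)` and targets `1`. For empty `S` only the
penalty remains. -/
noncomputable def ridgeLoss (lam : ℝ) (S : Finset κ) (z : κ → E) (b : κ → ℝ) (v : E) : ℝ :=
  lam / 2 * ‖v‖ ^ 2 + 1 / (2 * (#S : ℝ)) * ∑ j ∈ S, (b j - ⟪z j, v⟫) ^ 2

lemma hasGradientAt_norm_sq [CompleteSpace E] (v : E) :
    HasGradientAt (fun v : E => ‖v‖ ^ 2) ((2 : ℝ) • v) v := by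
  refine (hasStrictFDerivAt_norm_sq v).hasFDerivAt.congr_fderiv ?_
  ext u
  simp

lemma hasGradientAt_sub_inner_sq [CompleteSpace E] (b : ℝ) (z v : E) :
    HasGradientAt (fun v => (b - ⟪z, v⟫) ^ 2) ((-2 * (b - ⟪z, v⟫)) • z) v := by
  refine ((((innerSL ℝ z).hasFDerivAt (x := v)).const_sub b).pow 2).congr_fderiv ?_
  ext u
  simp

lemma hasGradientAt_ridgeLoss [CompleteSpace E] (lam : ℝ) (S : Finset κ) (z : κ → E) (b : κ → ℝ)
    (v : E) :
    HasGradientAt (ridgeLoss lam S z b)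
      (lam • v - (#S : ℝ)⁻¹ • ∑ j ∈ S, (b j - ⟪z j, v⟫) • z j) v := by
  have h_penalty := (hasGradientAt_norm_sq v).hasFDerivAt.const_mul (lam / 2)
  have h_residuals := (HasFDerivAt.fun_sum fun j (_ : j ∈ S) =>
    (hasGradientAt_sub_inner_sq (b j) (z j) v).hasFDerivAt).const_mul (1 / (2 * (#S : ℝ)))
  refine (h_penalty.add h_residuals).congr_fderiv ?_
  simp only [mul_smul, ← smul_sum, map_sub, map_smul, map_sum]
  module

end InnerProductSpace

section EuclideanSpace

variable {ι κ : Type*} [Fintype ι]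

lemma gradient_ridgeLoss_apply (lam : ℝ) (S : Finset κ) (z : κ → EuclideanSpace ℝ ι) (b : κ → ℝ)
    (v : EuclideanSpace ℝ ι) (i : ι) :
    gradient (ridgeLoss lam S z b) v i = lam * v i - 𝔼 j ∈ S, (b j - ⟪z j, v⟫) * z j i := by
  rw [(hasGradientAt_ridgeLoss lam S z b v).gradient, expect_eq_sum_div_card, div_eq_inv_mul]
  simp

lemma sq_gradient_ridgeLoss_apply_le {S : Finset κ} (hS : S.Nonempty)
    {z : κ → EuclideanSpace ℝ ι} {b : κ → ℝ} {v : EuclideanSpace ℝ ι} {i : ι} {B R : ℝ}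
    (hB : ∀ j ∈ S, |b j - ⟪z j, v⟫| ≤ B) (hR : ∀ j ∈ S, |z j i| ≤ R) (lam : ℝ) :
    gradient (ridgeLoss lam S z b) v i ^ 2 ≤ 2 * ((lam * v i) ^ 2 + B ^ 2 * R ^ 2) := by
  have h_mean : |𝔼 j ∈ S, (b j - ⟪z j, v⟫) * z j i| ≤ B * R := by
    refine (abs_expect_le _ _).trans (expect_le hS fun j hj => ?_)
    rw [abs_mul]
    exact mul_le_mul (hB j hj) (hR j hj) (abs_nonneg _) ((abs_nonneg _).trans (hB j hj))
  calc gradient (ridgeLoss lam S z b) v i ^ 2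
      = (lam * v i + -𝔼 j ∈ S, (b j - ⟪z j, v⟫) * z j i) ^ 2 := by
        rw [gradient_ridgeLoss_apply, sub_eq_add_neg]
    _ ≤ 2 * ((lam * v i) ^ 2 + (𝔼 j ∈ S, (b j - ⟪z j, v⟫) * z j i) ^ 2) := by
        rw [← neg_sq (𝔼 j ∈ S, _)]
        exact add_sq_le
    _ ≤ 2 * ((lam * v i) ^ 2 + (B * R) ^ 2) := by
        gcongr 2 * (_ + ?_)
        exact sq_le_sq.2 (h_mean.trans (le_abs_self _))
    _ = 2 * ((lam * v i) ^ 2 + B ^ 2 * R ^ 2) := by rw [mul_pow B]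

lemma sq_gradient_ridgeLoss_smul_sub_apply_le {S : Finset κ} (hS : S.Nonempty)
    {x : κ → EuclideanSpace ℝ ι} {p v : EuclideanSpace ℝ ι} {i : ι} {s ρ W R : ℝ} (hs : |s| ≤ 1)
    (hp : ‖p‖ ≤ ρ) (hx : ∀ j ∈ S, ‖x j‖ ≤ ρ) (hv : ‖v‖ ≤ W) (hR : ∀ j ∈ S, |x j i - p i| ≤ R)
    (lam : ℝ) :
    gradient (ridgeLoss lam S (fun j => s • (p - x j)) 1) v i ^ 2
      ≤ 2 * ((lam * v i) ^ 2 + (1 + 2 * ρ * W) ^ 2 * R ^ 2) := by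
  have h_scale (a : ℝ) (ha : 0 ≤ a) : |s| * a ≤ a := mul_le_of_le_one_left ha hs
  refine sq_gradient_ridgeLoss_apply_le hS (fun j hj => ?_) (fun j hj => ?_) lam
  · have h_feature : ‖s • (p - x j)‖ ≤ 2 * ρ := by
      rw [norm_smul, Real.norm_eq_abs]
      linarith [h_scale _ (norm_nonneg (p - x j)), norm_sub_le p (x j), hx j hj]
    simpa using abs_sub_inner_le 1 h_feature hv
  · calc |(s • (p - x j)) i| = |s| * |x j i - p i| := by simp [abs_mul, abs_sub_comm]
      _ ≤ |x j i - p i| := h_scale _ (abs_nonneg _)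
      _ ≤ R := hR j hj

end EuclideanSpace

theorem auc_gradient_norm_sum_bound_general {ι : Type*} [Fintype ι] (T : ℕ) (lam ρ W : ℝ)
    (x : ℕ → EuclideanSpace ℝ ι) (hx : ∀ t, ‖x t‖ ≤ ρ)
    (y : ℕ → ℝ) (hy : ∀ t, |y t| ≤ 1)
    (N : ℕ → ℕ) (hN : ∀ t, N t = #{j ∈ range t | y j ≠ y t})
    (L : ℕ → EuclideanSpace ℝ ι → ℝ)
    (hL : ∀ t v, L t v =
      if 0 < N t then
        lam / 2 * ‖v‖ ^ 2 +
          (1 / (2 * (N t : ℝ))) * ∑ j ∈ range t with y j ≠ y t, (1 - y t * ⟪x t - x j, v⟫) ^ 2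
      else 0)
    (w : ℕ → EuclideanSpace ℝ ι) (hw : ∀ t, ‖w t‖ ≤ W)
    (g : ℕ → EuclideanSpace ℝ ι) (hg : ∀ t, g t = gradient (L t) (w t))
    (C : ℝ) (hC : C = (1 + 2 * ρ * W) ^ 2)
    (r : ℕ → ι → ℝ)
    (hr : ∀ t i, r t i = {j ∈ range t | y j ≠ y t}.fold max 0 fun j => |x j i - x t i|) :
    ∑ i, √(∑ t ∈ range T, g t i ^ 2)
      ≤ √2 * ∑ i, √(∑ t ∈ range T, ((lam * w t i) ^ 2 + C * r t i ^ 2)) := by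
  refine sum_sqrt_sum_le_sqrt_mul zero_le_two fun t _ i _ => ?_
  rw [hg, hC]
  obtain hNt | hNt := (N t).eq_zero_or_pos
  · have h_loss : L t = fun _ => 0 := funext fun v => by simp [hL, hNt]
    rw [h_loss, gradient_fun_const, PiLp.zero_apply, zero_pow two_ne_zero]
    positivity
  have h_loss : L t = ridgeLoss lam {j ∈ range t | y j ≠ y t} (fun j => y t • (x t - x j)) 1 :=
    funext fun v => by
      rw [hL, if_pos hNt, hN]
      simp only [ridgeLoss, real_inner_smul_left, Pi.one_apply]
  have h_le_r : ∀ j ∈ {j ∈ range t | y j ≠ y t}, |x j i - x t i| ≤ r t i := fun j hj => by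
    rw [hr]
    exact (le_fold_max _).2 (.inr ⟨j, hj, le_rfl⟩)
  rw [h_loss]
  exact sq_gradient_ridgeLoss_smul_sub_apply_le (card_pos.1 (hN t ▸ hNt)) (hy t) (hx t)
    (fun j _ => hx j) (hw t) h_le_r lam

/-- Data-dependent bound on the sum of coordinatewise gradient norms from the proof of
Theorem 1 of the paper: with `‖x t‖₂ ≤ 1`, labels `y t ∈ {−1,+1}`, iterates with
`‖w t‖₂ ≤ 1/√λ`, and `g t = ∇ L t (w t)` for the per-round AUC losses `L t`
(which vanish when `N t = 0`),
`∑_i ‖g_{1:T,i}‖₂ ≤ √2 ∑_i sqrt (∑_{t<T} ((λ w_{t,i})² + C r_{t,i}²))`,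
where `C = (1 + 2/√λ)²` and `r t i = max_{j<t, y j ≠ y t} |x_{j,i} - x_{t,i}|`
(`0` when `N t = 0`). -/
theorem auc_gradient_norm_sum_bound (d T : ℕ) (lam : ℝ) (hlam : 0 < lam)
    (x : ℕ → EuclideanSpace ℝ (Fin d)) (hx : ∀ t, ‖x t‖ ≤ 1)
    (y : ℕ → ℝ) (hy : ∀ t, y t = 1 ∨ y t = -1)
    (N : ℕ → ℕ)
    (hN : ∀ t, N t = ((Finset.range t).filter (fun i => y i ≠ y t)).card)
    (L : ℕ → EuclideanSpace ℝ (Fin d) → ℝ)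
    (hL : ∀ t v, L t v =
      if 0 < N t then
        lam / 2 * ‖v‖ ^ 2 +
          (1 / (2 * (N t : ℝ))) *
            ∑ i ∈ (Finset.range t).filter (fun i => y i ≠ y t),
              (1 - y t * ⟪x t - x i, v⟫) ^ 2
      else 0)
    (w : ℕ → EuclideanSpace ℝ (Fin d)) (hw : ∀ t, ‖w t‖ ≤ 1 / Real.sqrt lam)
    (g : ℕ → EuclideanSpace ℝ (Fin d))
    (hg : ∀ t, g t = gradient (L t) (w t))
    (C : ℝ) (hC : C = (1 + 2 / Real.sqrt lam) ^ 2)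
    (r : ℕ → Fin d → ℝ)
    (hr : ∀ t i, r t i =
      ((Finset.range t).filter (fun j => y j ≠ y t)).fold max 0
        (fun j => |x j i - x t i|)) :
    ∑ i : Fin d, Real.sqrt (∑ t ∈ Finset.range T, (g t i) ^ 2)
      ≤ Real.sqrt 2 *
          ∑ i : Fin d,
            Real.sqrt (∑ t ∈ Finset.range T, ((lam * w t i) ^ 2 + C * (r t i) ^ 2)) :=
  auc_gradient_norm_sum_bound_general T lam 1 (1 / √lam) x hx y
    (fun t => by obtain h | h := hy t <;> simp [h]) N hN L hL w hw g hg C (by rw [hC]; ring) r hr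
end
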